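/- Let H be a complex Hilbert space and let G = U_∞(H) be the group of unitary operators u on H with u − 1 compact, equipped with the operator-norm topology. Then for every continuous unitary representation (π,K) of G on a complex Hilbert space K, every continuous 1-cocycle β : G → K is a 1-coboundary, i.e. H¹(G,π,K) = {0}. -/

import Mathlib

/-- The group `U_∞(H)` of unitary operators `u` on the complex Hilbert space `H` such that
`u - 1` is a compact operator, as a subgroup of the full unitary group of `H`.  As a subtype
of the bounded operators on `H` it automatically carries the operator-norm topology. -/
noncomputable def UinfGroup (H : Type*) [NormedAddCommGroup H] [InnerProductSpace ℂ H] [CompleteSpace H] :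
    Subgroup (unitary (H →L[ℂ] H)) where
  carrier := {u : unitary (H →L[ℂ] H) | IsCompactOperator (⇑((u : H →L[ℂ] H) - 1))}
  one_mem' := by
    have h : ((1 : unitary (H →L[ℂ] H)) : H →L[ℂ] H) - 1 = 0 := by
      rw [Submonoid.coe_one]; exact sub_self 1
    show IsCompactOperator _
    rw [h]
    exact isCompactOperator_zero
  mul_mem' := by
    intro u v hu hv
    have key : ((u * v : unitary (H →L[ℂ] H)) : H →L[ℂ] H) - 1 =
        (u : H →L[ℂ] H) * ((v : H →L[ℂ] H) - 1) + ((u : H →L[ℂ] H) - 1) := by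
      have hcoe : ((u * v : unitary (H →L[ℂ] H)) : H →L[ℂ] H)
          = (u : H →L[ℂ] H) * (v : H →L[ℂ] H) := rfl
      rw [hcoe]; noncomm_ring
    show IsCompactOperator _
    rw [key]
    have h1 : IsCompactOperator (⇑((u : H →L[ℂ] H) * ((v : H →L[ℂ] H) - 1))) := by
      have : ⇑((u : H →L[ℂ] H) * ((v : H →L[ℂ] H) - 1))
          = (u : H →L[ℂ] H) ∘ ⇑((v : H →L[ℂ] H) - 1) := rfl
      rw [this]
      exact hv.continuous_comp (u : H →L[ℂ] H).continuous
    have : ⇑((u : H →L[ℂ] H) * ((v : H →L[ℂ] H) - 1) + ((u : H →L[ℂ] H) - 1))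
        = ⇑((u : H →L[ℂ] H) * ((v : H →L[ℂ] H) - 1)) + ⇑((u : H →L[ℂ] H) - 1) := rfl
    rw [this]
    exact h1.add hu
  inv_mem' := by
    intro u hu
    have huu : ((u⁻¹ : unitary (H →L[ℂ] H)) : H →L[ℂ] H) * (u : H →L[ℂ] H) = 1 := by
      have : ((u⁻¹ * u : unitary (H →L[ℂ] H)) : H →L[ℂ] H)
          = ((u⁻¹ : unitary (H →L[ℂ] H)) : H →L[ℂ] H) * (u : H →L[ℂ] H) := rfl
      rw [← this, inv_mul_cancel u, Submonoid.coe_one]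
    have key : ((u⁻¹ : unitary (H →L[ℂ] H)) : H →L[ℂ] H) - 1 =
        -(((u⁻¹ : unitary (H →L[ℂ] H)) : H →L[ℂ] H) * ((u : H →L[ℂ] H) - 1)) := by
      rw [mul_sub, huu, mul_one]; abel
    show IsCompactOperator _
    rw [key]
    have h1 : IsCompactOperator
        (⇑(((u⁻¹ : unitary (H →L[ℂ] H)) : H →L[ℂ] H) * ((u : H →L[ℂ] H) - 1))) := by
      have : ⇑(((u⁻¹ : unitary (H →L[ℂ] H)) : H →L[ℂ] H) * ((u : H →L[ℂ] H) - 1))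
          = ((u⁻¹ : unitary (H →L[ℂ] H)) : H →L[ℂ] H) ∘ ⇑((u : H →L[ℂ] H) - 1) := rfl
      rw [this]
      exact hu.continuous_comp ((u⁻¹ : unitary (H →L[ℂ] H)) : H →L[ℂ] H).continuous
    have : ⇑(-(((u⁻¹ : unitary (H →L[ℂ] H)) : H →L[ℂ] H) * ((u : H →L[ℂ] H) - 1)))
        = -⇑(((u⁻¹ : unitary (H →L[ℂ] H)) : H →L[ℂ] H) * ((u : H →L[ℂ] H) - 1)) := rfl
    rw [this]
    exact h1.neg

/-- The spectrum of an element of `U_∞(H)` misses a point of the circle other than `1`. -/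
lemma uinf_exists_gap {H : Type*} [NormedAddCommGroup H] [InnerProductSpace ℂ H] [CompleteSpace H]
    (u : unitary (H →L[ℂ] H)) (hu : IsCompactOperator (⇑((u : H →L[ℂ] H) - 1))) :
    ∃ l : ℂ, ‖l‖ = 1 ∧ l ≠ 1 ∧ l ∉ spectrum ℂ (u : H →L[ℂ] H) := by
  by_contra! hcon
  let t : ℕ → ℝ := fun n => 1 / ((n : ℝ) + 1)
  have ht0 : ∀ n, 0 < t n := fun n => by positivity
  have ht1 : ∀ n, t n ≤ 1 := fun n => by
    simp only [t]
    rw [div_le_one (by positivity)]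
    have : (0 : ℝ) ≤ n := by positivity
    linarith
  let l : ℕ → ℂ := fun n => ⟨-t n, Real.sqrt (1 - t n ^ 2)⟩
  have hl1 : ∀ n, ‖l n‖ = 1 := fun n => by
    have h : 0 ≤ 1 - t n ^ 2 := by nlinarith [ht0 n, ht1 n]
    have h2 : ‖l n‖ ^ 2 = 1 := by
      rw [← Complex.normSq_eq_norm_sq, Complex.normSq_apply]
      have := Real.mul_self_sqrt h
      simp only [l]
      rw [this]; ring
    have := norm_nonneg (l n)
    nlinarith
  have hl2 : ∀ n, 1 ≤ ‖l n - 1‖ := fun n => by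
    refine le_trans ?_ (Complex.abs_re_le_norm _)
    have : (l n - 1).re = -(t n + 1) := by simp [l]; ring
    rw [this, abs_neg, abs_of_pos (by linarith [ht0 n])]
    linarith [ht0 n]
  have hlinj : ∀ n m, l n = l m → n = m := fun n m h => by
    have h1 : t n = t m := by simpa [l] using congrArg Complex.re h
    simp only [t] at h1
    have h2 : ((n : ℝ) + 1) = (m : ℝ) + 1 := by
      have := congrArg (fun x : ℝ => x⁻¹) h1
      simpa using this
    exact_mod_cast (by linarith : (n : ℝ) = m)
  have hne1 : ∀ n, l n ≠ 1 := fun n h => by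
    have := hl2 n
    rw [h] at this
    norm_num at this
  have hev : ∀ n, ∃ e : H, ‖e‖ = 1 ∧ (u : H →L[ℂ] H) e = l n • e := fun n => by
    have hs := hcon (l n) (hl1 n) (hne1 n)
    have hs' : l n - 1 ∈ spectrum ℂ ((u : H →L[ℂ] H) - 1) := by
      have := spectrum.sub_singleton_eq (u : H →L[ℂ] H) (1 : ℂ)
      rw [map_one] at this
      rw [← this]
      exact Set.sub_mem_sub hs rfl
    have he := (hu.hasEigenvalue_iff_mem_spectrum (sub_ne_zero.2 (hne1 n))).2 hs'
    obtain ⟨x, hx⟩ := he.exists_hasEigenvector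
    have hx0 : x ≠ 0 := hx.2
    have hxe : (u : H →L[ℂ] H) x = l n • x := by
      have := hx.apply_eq_smul
      simp [sub_smul] at this
      exact this
    refine ⟨((‖x‖⁻¹ : ℝ) : ℂ) • x, ?_, ?_⟩
    · rw [norm_smul]
      simp [hx0]
    · rw [map_smul, hxe, smul_comm]
  choose e he1 he2 using hev
  have horth : ∀ n m, n ≠ m → inner ℂ (e n) (e m) = 0 := fun n m hnm => by
    have h1 : inner ℂ ((u : H →L[ℂ] H) (e n)) ((u : H →L[ℂ] H) (e m)) = inner ℂ (e n) (e m) := by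
      rw [← ContinuousLinearMap.adjoint_inner_right, ← ContinuousLinearMap.star_eq_adjoint,
        ← ContinuousLinearMap.mul_apply, Unitary.coe_star_mul_self]
      rfl
    rw [he2, he2, inner_smul_left, inner_smul_right] at h1
    by_contra h0
    have h2 : (starRingEnd ℂ) (l n) * l m = 1 := by
      have : ((starRingEnd ℂ) (l n) * l m - 1) * inner ℂ (e n) (e m) = 0 := by
        linear_combination h1
      rcases mul_eq_zero.1 this with h | h
      · linear_combination h
      · exact absurd h h0
    have h3 : l n * (starRingEnd ℂ) (l n) = 1 := by
      rw [Complex.mul_conj, Complex.normSq_eq_norm_sq, hl1]; norm_num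
    apply hnm
    apply hlinj
    linear_combination l m * h3 - l n * h2
  have hfar : ∀ n m, n ≠ m → 1 ≤ ‖((u : H →L[ℂ] H) - 1) (e n) - ((u : H →L[ℂ] H) - 1) (e m)‖ := by
    intro n m hnm
    have ha : ∀ k, ((u : H →L[ℂ] H) - 1) (e k) = (l k - 1) • e k := fun k => by
      simp [he2, sub_smul]
    rw [ha, ha]
    have h1 : inner ℂ (e n) ((l n - 1) • e n - (l m - 1) • e m) = l n - 1 := by
      rw [inner_sub_right, inner_smul_right, inner_smul_right, horth n m hnm,
        inner_self_eq_norm_sq_to_K, he1]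
      simp
    have h2 := norm_inner_le_norm (𝕜 := ℂ) (e n) ((l n - 1) • e n - (l m - 1) • e m)
    rw [h1, he1, one_mul] at h2
    exact (hl2 n).trans h2
  obtain ⟨C, hC, hC'⟩ := IsCompactOperator.image_closedBall_subset_compact
    (f := (((u : H →L[ℂ] H) - 1 : H →L[ℂ] H) : H →ₗ[ℂ] H)) hu 1
  obtain ⟨y, -, φ, hφ, hy⟩ := hC.tendsto_subseq (x := fun n => ((u : H →L[ℂ] H) - 1) (e n))
    (fun n => hC' ⟨e n, by simp [he1], rfl⟩)
  obtain ⟨N, hN⟩ := Metric.cauchySeq_iff'.1 hy.cauchySeq 1 one_pos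
  have h1 := hN (N + 1) (Nat.le_succ N)
  rw [dist_eq_norm] at h1
  exact absurd (hfar (φ (N + 1)) (φ N) (by simp [hφ.injective.eq_iff])) (not_le.2 h1)

/-- Every element of `U_∞(H)` has `n`-th roots in `U_∞(H)` uniformly close to `1`. -/
lemma uinf_exists_root {H : Type*} [NormedAddCommGroup H] [InnerProductSpace ℂ H] [CompleteSpace H]
    (u : UinfGroup H) (n : ℕ) (hn : 0 < n) :
    ∃ v : UinfGroup H, v ^ n = u ∧
      ‖((v : unitary (H →L[ℂ] H)) : H →L[ℂ] H) - 1‖ ≤ 2 * Real.pi / n := by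
  obtain ⟨⟨u, huu⟩, hu⟩ := u
  have hu' : IsCompactOperator (⇑(u - 1)) := hu
  obtain ⟨l, hl1, hl2, hl3⟩ := uinf_exists_gap ⟨u, huu⟩ hu
  have hl3' : l ∉ spectrum ℂ u := hl3
  have hl0 : l ≠ 0 := by rintro rfl; simp at hl1
  have hn0 : (n : ℂ) ≠ 0 := by exact_mod_cast hn.ne'
  have hnR : (0 : ℝ) < n := by exact_mod_cast hn
  have hnormal : IsStarNormal u := by
    constructor
    show star u * u = u * star u
    rw [(Unitary.mem_iff.1 huu).1, (Unitary.mem_iff.1 huu).2]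
  have hcirc : ∀ z ∈ spectrum ℂ u, ‖z‖ = 1 := fun z hz => by
    simpa using Unitary.spectrum_subset_circle (⟨u, huu⟩ : unitary (H →L[ℂ] H)) hz
  have hslit : ∀ z : ℂ, ‖z‖ = 1 → z ≠ l → -z / l ∈ Complex.slitPlane := fun z hz hzl => by
    rw [Complex.mem_slitPlane_iff_arg]
    have hz0 : z ≠ 0 := by rintro rfl; simp at hz
    refine ⟨fun h => hzl ?_, div_ne_zero (neg_ne_zero.2 hz0) hl0⟩
    have h1 := Complex.norm_mul_exp_arg_mul_I (-z / l)
    rw [h] at h1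
    simp [hz, hl1] at h1
    field_simp at h1
    exact neg_injective h1.symm
  let f : ℂ → ℂ := fun z => Complex.exp ((Complex.log (-z / l) - Complex.log (-1 / l)) / n)
  have hfd : ∀ z : ℂ, ‖z‖ = 1 → z ≠ l → DifferentiableAt ℂ f z := fun z hz hzl => by
    have hs := hslit z hz hzl
    have : DifferentiableAt ℂ (fun z : ℂ => Complex.log (-z / l)) z :=
      (by fun_prop : DifferentiableAt ℂ (fun z : ℂ => -z / l) z).clog hs
    simp only [f]
    fun_prop
  have hspec : ∀ z ∈ spectrum ℂ u, z ≠ l := fun z hz h => hl3' (h ▸ hz)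
  have hfcont : ContinuousOn f (spectrum ℂ u) := fun z hz =>
    (hfd z (hcirc z hz) (hspec z hz)).continuousAt.continuousWithinAt
  have hf1 : f 1 = 1 := by simp [f]
  have hlog : ∀ z : ℂ, ‖z‖ = 1 → Complex.log (-z / l) = (Complex.arg (-z / l) : ℂ) * Complex.I :=
    fun z hz => by simp [Complex.log, hz, hl1]
  let θ : ℂ → ℝ := fun z => (Complex.arg (-z / l) - Complex.arg (-1 / l)) / n
  have hfθ : ∀ z : ℂ, ‖z‖ = 1 → f z = Complex.exp (Complex.I * (θ z : ℂ)) := fun z hz => by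
    simp only [f, θ]
    rw [hlog z hz, hlog 1 (by simp)]
    congr 1
    push_cast
    ring
  have hfn : ∀ z ∈ spectrum ℂ u, f z ^ n = z := fun z hz => by
    have hz0 : z ≠ 0 := by rintro rfl; simpa using hcirc 0 hz
    simp only [f]
    rw [← Complex.exp_nat_mul, mul_div_cancel₀ _ hn0, Complex.exp_sub, Complex.exp_log,
      Complex.exp_log]
    · field_simp
    · exact div_ne_zero (by norm_num) hl0
    · exact div_ne_zero (neg_ne_zero.2 hz0) hl0
  have hgcont : ContinuousOn (dslope f 1) (spectrum ℂ u) := fun z hz => by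
    by_cases h : z = 1
    · subst h
      exact (continuousAt_dslope_same.2 (hfd 1 (by simp) hl2.symm)).continuousWithinAt
    · exact ((continuousAt_dslope_of_ne h).2
        (hfd z (hcirc z hz) (hspec z hz)).continuousAt).continuousWithinAt
  have hvu : cfc f u ∈ unitary (H →L[ℂ] H) := by
    rw [cfc_unitary_iff f u]
    intro z hz
    rw [hfθ z (hcirc z hz)]
    have : ‖Complex.exp (Complex.I * (θ z : ℂ))‖ = 1 := by
      rw [mul_comm]; exact Complex.norm_exp_ofReal_mul_I _
    rw [Complex.star_def, mul_comm, Complex.mul_conj, Complex.normSq_eq_norm_sq, this]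
    norm_num
  have hv1 : cfc f u - 1 = cfc (fun z => f z - 1) u := by
    rw [cfc_sub (fun z => f z) (fun _ => (1 : ℂ)) u hfcont continuousOn_const, cfc_const_one ℂ u]
  have hfac : cfc (fun z => f z - 1) u = cfc (dslope f 1) u * (u - 1) := by
    have h1 : cfc (fun z : ℂ => z - 1) u = u - 1 := by
      rw [cfc_sub (fun z => z) (fun _ => (1 : ℂ)) u continuousOn_id continuousOn_const,
        cfc_const_one ℂ u, cfc_id' ℂ u]
    rw [← h1, ← cfc_mul (dslope f 1) (fun z : ℂ => z - 1) u hgcont (by fun_prop)]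
    congr 1
    ext z
    have := sub_smul_dslope f 1 z
    rw [hf1, smul_eq_mul] at this
    rw [← this, mul_comm]
  have hcomp : IsCompactOperator (⇑(cfc f u - 1)) := by
    rw [hv1, hfac]
    exact hu'.continuous_comp (cfc (dslope f 1) u).continuous
  refine ⟨⟨⟨cfc f u, hvu⟩, hcomp⟩, ?_, ?_⟩
  · apply Subtype.ext
    apply Subtype.ext
    show cfc f u ^ n = u
    rw [← cfc_pow f n u hfcont]
    conv_rhs => rw [← cfc_id' ℂ u]
    exact cfc_congr hfn
  · show ‖cfc f u - 1‖ ≤ _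
    rw [hv1]
    refine norm_cfc_le (by positivity) fun z hz => ?_
    rw [hfθ z (hcirc z hz)]
    refine Real.norm_exp_I_mul_ofReal_sub_one_le.trans ?_
    simp only [θ]
    rw [norm_div, Real.norm_natCast]
    gcongr
    rw [Real.norm_eq_abs, abs_le]
    constructor <;> linarith [Complex.arg_le_pi (-z / l), Complex.neg_pi_lt_arg (-z / l),
      Complex.arg_le_pi (-1 / l), Complex.neg_pi_lt_arg (-1 / l)]

/-- Continuous cocycles on `U_∞(H)` are bounded. -/
lemma uinf_cocycle_bounded
    {H : Type*} [NormedAddCommGroup H] [InnerProductSpace ℂ H] [CompleteSpace H]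
    {K : Type*} [NormedAddCommGroup K] [InnerProductSpace ℂ K]
    (π : ↥(UinfGroup H) →* (K ≃ₗᵢ[ℂ] K))
    (β : ↥(UinfGroup H) → K) (hβcont : Continuous β)
    (hβcoc : ∀ g h : ↥(UinfGroup H), β (g * h) = β g + π g (β h)) :
    ∃ C : ℝ, ∀ g, ‖β g‖ ≤ C := by
  have h1 : β 1 = 0 := by simpa using hβcoc 1 1
  obtain ⟨δ, hδ, hb⟩ := Metric.continuousAt_iff.1 (hβcont.continuousAt (x := 1)) 1 one_pos
  obtain ⟨n, hn⟩ := exists_nat_gt (2 * Real.pi / δ)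
  have hn0 : (0 : ℝ) < n := lt_trans (by positivity) hn
  have hpow : ∀ (v : UinfGroup H) (k : ℕ), ‖β (v ^ k)‖ ≤ k * ‖β v‖ := by
    intro v k
    induction k with
    | zero => simp [h1]
    | succ k ih =>
      rw [pow_succ, hβcoc]
      refine (norm_add_le _ _).trans ?_
      rw [LinearIsometryEquiv.norm_map]
      push_cast
      linarith
  refine ⟨n, fun g => ?_⟩
  obtain ⟨v, hv, hvn⟩ := uinf_exists_root g n (by exact_mod_cast hn0)
  have hd : dist v 1 < δ := by
    have : dist v 1 = ‖((v : unitary (H →L[ℂ] H)) : H →L[ℂ] H) - 1‖ := by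
      rw [← dist_eq_norm]; rfl
    rw [this]
    refine hvn.trans_lt ?_
    rw [div_lt_iff₀ hδ] at hn
    rw [div_lt_iff₀ hn0]
    linarith
  have hv1 := hb hd
  rw [h1, dist_zero_right] at hv1
  rw [← hv]
  refine (hpow v n).trans ?_
  nlinarith

/-- Chebyshev centre: a nonempty bounded family in a Hilbert space has a unique centre. -/
lemma exists_unique_chebyshev_center
    {K : Type*} [NormedAddCommGroup K] [InnerProductSpace ℂ K] [CompleteSpace K]
    {ι : Type*} [Nonempty ι] (b : ι → K) (C : ℝ) (hC : ∀ i, ‖b i‖ ≤ C) :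
    ∃ R : ℝ, ∃ v : K, (∀ i, ‖v - b i‖ ^ 2 ≤ R) ∧
      ∀ w : K, (∀ i, ‖w - b i‖ ^ 2 ≤ R) → w = v := by
  let S : Set ℝ := {r | ∃ v : K, ∀ i, ‖v - b i‖ ^ 2 ≤ r}
  have hS0 : ∀ r ∈ S, 0 ≤ r := by
    rintro r ⟨v, hv⟩
    obtain ⟨i⟩ := ‹Nonempty ι›
    exact (sq_nonneg _).trans (hv i)
  have hSne : S.Nonempty := ⟨C ^ 2, 0, fun i => by
    rw [zero_sub, norm_neg]
    exact pow_le_pow_left₀ (norm_nonneg _) (hC i) 2⟩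
  have hSb : BddBelow S := ⟨0, hS0⟩
  let R := sInf S
  -- key inequality
  have key : ∀ (v w : K) (r : ℝ), (∀ i, ‖v - b i‖ ^ 2 ≤ r) → (∀ i, ‖w - b i‖ ^ 2 ≤ r) →
      ‖v - w‖ ^ 2 ≤ 4 * (r - R) := by
    intro v w r hv hw
    have hm : r - ‖v - w‖ ^ 2 / 4 ∈ S := by
      refine ⟨(1 / 2 : ℂ) • (v + w), fun i => ?_⟩
      have hp := parallelogram_law_with_norm ℂ (v - b i) (w - b i)
      have e1 : v - b i + (w - b i) = (2 : ℂ) • ((1 / 2 : ℂ) • (v + w) - b i) := by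
        module
      have e2 : v - b i - (w - b i) = v - w := by abel
      rw [e1, e2, norm_smul] at hp
      norm_num at hp
      have := hv i
      have := hw i
      norm_num
      nlinarith
    have := csInf_le hSb hm
    change R ≤ _ at this
    linarith
  have hex : ∀ n : ℕ, ∃ v : K, ∀ i, ‖v - b i‖ ^ 2 ≤ R + 1 / ((n : ℝ) + 1) := fun n => by
    obtain ⟨r, ⟨v, hv⟩, hr⟩ := exists_lt_of_csInf_lt hSne
      (show sInf S < R + 1 / ((n : ℝ) + 1) from lt_add_of_pos_right _ (by positivity))
    exact ⟨v, fun i => (hv i).trans hr.le⟩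
  choose x hx using hex
  have hlim : Filter.Tendsto (fun n : ℕ => 1 / ((n : ℝ) + 1)) Filter.atTop (nhds 0) :=
    tendsto_one_div_add_atTop_nhds_zero_nat
  have hcau : CauchySeq x := by
    refine cauchySeq_of_le_tendsto_0 (fun n : ℕ => Real.sqrt (4 * (1 / ((n : ℝ) + 1)))) ?_ ?_
    · intro n m N hn hm
      rw [dist_eq_norm]
      apply Real.le_sqrt_of_sq_le
      have hmono : ∀ k, N ≤ k → 1 / ((k : ℝ) + 1) ≤ 1 / ((N : ℝ) + 1) := fun k hk =>
        Nat.one_div_le_one_div hk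
      have := key (x n) (x m) (R + 1 / ((N : ℝ) + 1))
        (fun i => (hx n i).trans (by linarith [hmono n hn]))
        (fun i => (hx m i).trans (by linarith [hmono m hm]))
      linarith
    · have := (hlim.const_mul 4).sqrt
      simpa using this
  obtain ⟨v, hv⟩ := cauchySeq_tendsto_of_complete hcau
  have hvR : ∀ i, ‖v - b i‖ ^ 2 ≤ R := fun i => by
    have h1 : Filter.Tendsto (fun n => ‖x n - b i‖ ^ 2) Filter.atTop (nhds (‖v - b i‖ ^ 2)) :=
      ((hv.sub_const (b i)).norm).pow 2
    have h2 : Filter.Tendsto (fun n : ℕ => R + 1 / ((n : ℝ) + 1)) Filter.atTop (nhds R) := by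
      simpa using hlim.const_add R
    exact le_of_tendsto_of_tendsto' h1 h2 (fun n => hx n i)
  refine ⟨R, v, hvR, fun w hw => ?_⟩
  have := key w v R hw hvR
  have h0 : ‖w - v‖ = 0 := by nlinarith [norm_nonneg (w - v)]
  exact sub_eq_zero.1 (norm_eq_zero.1 h0)

/-- For `G = U_∞(H)`, the group of unitary operators `u` on a complex Hilbert
space `H` with `u - 1` compact, equipped with the operator-norm topology, every continuous
1-cocycle of any continuous unitary representation `(π, K)` of `G` is a 1-coboundary,
i.e. `H¹(G, π, K) = {0}`. -/
theorem uinf_firstCohomology_vanishes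
    {H : Type*} [NormedAddCommGroup H] [InnerProductSpace ℂ H] [CompleteSpace H]
    {K : Type*} [NormedAddCommGroup K] [InnerProductSpace ℂ K] [CompleteSpace K]
    -- `(π, K)` is a continuous unitary representation of `U_∞(H)`:
    (π : ↥(UinfGroup H) →* (K ≃ₗᵢ[ℂ] K))
    (hπ : ∀ v : K, Continuous fun g : ↥(UinfGroup H) => π g v)
    -- `β` is a continuous 1-cocycle:
    (β : ↥(UinfGroup H) → K) (hβcont : Continuous β)
    (hβcoc : ∀ g h : ↥(UinfGroup H), β (g * h) = β g + π g (β h)) :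
    -- then `β` is a 1-coboundary:
    ∃ v : K, ∀ g : ↥(UinfGroup H), β g = π g v - v := by
  obtain ⟨C, hC⟩ := uinf_cocycle_bounded π β hβcont hβcoc
  obtain ⟨R, v, hv, huniq⟩ := exists_unique_chebyshev_center β C hC
  have hfix : ∀ g, π g v + β g = v := fun g => huniq _ fun h => by
    have e : β h = β g + π g (β (g⁻¹ * h)) := by
      rw [← hβcoc, mul_inv_cancel_left]
    have e2 : π g v + β g - β h = π g (v - β (g⁻¹ * h)) := by
      rw [e, map_sub]; abel
    rw [e2, LinearIsometryEquiv.norm_map]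
    exact hv _
  refine ⟨-v, fun g => ?_⟩
  have := hfix g
  rw [map_neg, sub_neg_eq_add, neg_add_eq_sub, eq_sub_iff_add_eq, add_comm]
  exact this
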